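/- Let n ≥ 1, a_1, a_2 > 0 with a_1 ≠ a_2, and let P_1, P_2 : ℝ × (ℝⁿ \ {0}) → ℝ be positively homogeneous of degree 2 in ξ with sup_{t∈ℝ, |ξ|=1} |P_k(t,ξ)| < ∞ (k = 1,2). Assume inf_{t∈ℝ, |ξ|=1} { (a_1 − a_2)² + 4 P_1(t,ξ) P_2(t,ξ) } > 0 and inf_{t∈ℝ, |ξ|=1} { a_1 a_2 − P_1(t,ξ) P_2(t,ξ) } > 0. For s ≥ 0 and c_k = √(a_k(1+s)), define φ_{1,2,3,4}(s,t,ξ) = ± (|ξ|/√2) · √( c_1² + c_2² ± √( (c_1² − c_2²)² + 4 P_1(t,ξ) P_2(t,ξ) |ξ|^{-4} ) ). Then all expressions under the square roots are positive, so the four values φ_j(s,t,ξ) are real, pairwise distinct, and for every δ > 0, inf { |φ_j(s,t,ξ) − φ_k(s,t,ξ)| : s ∈ [0,δ], t ∈ ℝ, |ξ| = 1, j ≠ k } > 0. -/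

import Mathlib

open MeasureTheory Set

noncomputable section

/-!
After division by `(|ξ| / √2)²`, the squares of the characteristic roots are `A ± √D`, where
`A = c₁² + c₂²` and `A² - D = 4 (c₁² c₂² - P₁ P₂ |ξ|⁻⁴)`. The two infimum conditions therefore bound
`D` and `A² - D` from below at `s = 0`. Since `1 + s ≥ 1`, both bounds persist for `s ≥ 0`, and by
homogeneity they hold for all `ξ ≠ 0`. If `D` and `A² - D` are at least `d > 0`, then the four
numbers `±√(A ± √D)` are at distance at least `√(d / A)` from each other, and `A` is bounded
for `s ≤ δ`.
-/

section Biquadratic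

variable {A D d : ℝ}

/-- The four solutions `±√(A ± √D)` of `(X² - A)² = D`, each listed next to its opposite, and the
larger pair first. -/
def biquadraticRoot (A D : ℝ) : Fin 4 → ℝ :=
  ![√(A + √D), -√(A + √D), √(A - √D), -√(A - √D)]

lemma biquadraticRoot_apply (A D : ℝ) (j : Fin 4) :
    biquadraticRoot A D j = ![1, -1, 1, -1] j * √(A + ![1, 1, -1, -1] j * √D) := by
  fin_cases j <;> simp [biquadraticRoot, sub_eq_add_neg]

lemma sqrt_div_le_sqrt_add_sqrt_sub_sqrt_sub_sqrt (hA : 0 < A) (hD : 0 ≤ D) (hDA : D ≤ A ^ 2) :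
    √(D / A) ≤ √(A + √D) - √(A - √D) := by
  have hDA' : √D ≤ A := Real.sqrt_le_iff.2 ⟨hA.le, hDA⟩
  have mul_eq : √(A + √D) * √(A - √D) = √(A ^ 2 - D) := by
    rw [← Real.sqrt_mul (by positivity), ← sq_sub_sq, Real.sq_sqrt hD]
  have sq_eq : (√(A + √D) - √(A - √D)) ^ 2 = 2 * A - 2 * √(A ^ 2 - D) := by
    rw [sub_sq, mul_assoc, mul_eq, Real.sq_sqrt (by positivity), Real.sq_sqrt (sub_nonneg.2 hDA')]
    ring
  have am_gm : 2 * A * √(A ^ 2 - D) ≤ A ^ 2 + (A ^ 2 - D) := by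
    have h := two_mul_le_add_sq A √(A ^ 2 - D)
    rwa [Real.sq_sqrt (sub_nonneg.2 hDA)] at h
  have sqrt_le : √(A - √D) ≤ √(A + √D) := Real.sqrt_le_sqrt (by linarith [Real.sqrt_nonneg D])
  refine Real.sqrt_le_iff.2 ⟨sub_nonneg.2 sqrt_le, ?_⟩
  rw [sq_eq, div_le_iff₀ hA]
  linarith

lemma sqrt_div_le_two_mul_sqrt_sub_sqrt (hA : 0 < A) (hD : 0 ≤ D) (hDA : D ≤ A ^ 2) :
    √((A ^ 2 - D) / A) ≤ 2 * √(A - √D) := by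
  have hDA' : √D ≤ A := Real.sqrt_le_iff.2 ⟨hA.le, hDA⟩
  refine Real.sqrt_le_iff.2 ⟨by positivity, ?_⟩
  rw [mul_pow, Real.sq_sqrt (sub_nonneg.2 hDA'), div_le_iff₀ hA]
  calc A ^ 2 - D = (A + √D) * (A - √D) := by rw [← sq_sub_sq, Real.sq_sqrt hD]
    _ ≤ (4 * A) * (A - √D) := mul_le_mul_of_nonneg_right (by linarith) (sub_nonneg.2 hDA')
    _ = 2 ^ 2 * (A - √D) * A := by ring

lemma le_abs_sub_of_opposite_pairs {x y e : ℝ} (he : 0 ≤ e) (hy : e ≤ 2 * y) (hxy : e ≤ x - y)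
    {j k : Fin 4} (hjk : j ≠ k) : e ≤ |![x, -x, y, -y] j - ![x, -x, y, -y] k| := by
  rw [le_abs]
  fin_cases j <;> fin_cases k <;>
    simp only [Fin.zero_eta, Fin.mk_one, Fin.reduceFinMk, Matrix.cons_val, ne_eq,
      not_true_eq_false] at hjk ⊢ <;>
    first
    | (left; linarith)
    | (right; linarith)

theorem sqrt_div_le_abs_biquadraticRoot_sub (hA : 0 < A) (hd : 0 ≤ d) (hD : d ≤ D)
    (hAD : d ≤ A ^ 2 - D) {j k : Fin 4} (hjk : j ≠ k) :
    √(d / A) ≤ |biquadraticRoot A D j - biquadraticRoot A D k| := by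
  have hD₀ : 0 ≤ D := hd.trans hD
  have hDA : D ≤ A ^ 2 := sub_nonneg.1 (hd.trans hAD)
  refine le_abs_sub_of_opposite_pairs (Real.sqrt_nonneg _) ?_ ?_ hjk
  · exact (Real.sqrt_le_sqrt (by gcongr)).trans (sqrt_div_le_two_mul_sqrt_sub_sqrt hA hD₀ hDA)
  · exact (Real.sqrt_le_sqrt (by gcongr)).trans
      (sqrt_div_le_sqrt_add_sqrt_sub_sqrt_sub_sqrt hA hD₀ hDA)

end Biquadratic

section KirchhoffRoots

variable {E : Type*} [SeminormedAddCommGroup E] {a₁ a₂ s d : ℝ} {p₁ p₂ : E → ℝ} {ξ : E}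

/-- The discriminant `(c₁² - c₂²)² + 4 p₁(ξ) p₂(ξ) |ξ|⁻⁴`, with `c_k² = a_k (1 + s)`, of the
characteristic equation `(X - c₁²) (X - c₂²) = p₁(ξ) p₂(ξ) |ξ|⁻⁴` of the coupled Kirchhoff system,
where `X` is the square of a characteristic root divided by `|ξ|²`. The symbols `p₁`, `p₂` are taken
at a fixed time. At `ξ = 0` the power of the norm is `0`. -/
def kirchhoffDiscr (a₁ a₂ : ℝ) (p₁ p₂ : E → ℝ) (s : ℝ) (ξ : E) : ℝ :=
  (a₁ * (1 + s) - a₂ * (1 + s)) ^ 2 + 4 * p₁ ξ * p₂ ξ * ‖ξ‖ ^ (-4 : ℝ)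

/-- The characteristic roots `± (|ξ| / √2) √(c₁² + c₂² ± √D)` of the coupled Kirchhoff system at a
fixed time, with `D` the discriminant `kirchhoffDiscr`. The outer sign alternates with `j`, and the
inner sign is positive for `j = 0, 1`. -/
def kirchhoffRoot (a₁ a₂ : ℝ) (p₁ p₂ : E → ℝ) (s : ℝ) (ξ : E) (j : Fin 4) : ℝ :=
  ![1, -1, 1, -1] j * (‖ξ‖ / √2) *
    √(a₁ * (1 + s) + a₂ * (1 + s) + ![1, 1, -1, -1] j * √(kirchhoffDiscr a₁ a₂ p₁ p₂ s ξ))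

lemma kirchhoffRoot_eq_mul_biquadraticRoot (j : Fin 4) :
    kirchhoffRoot a₁ a₂ p₁ p₂ s ξ j = ‖ξ‖ / √2 *
      biquadraticRoot (a₁ * (1 + s) + a₂ * (1 + s)) (kirchhoffDiscr a₁ a₂ p₁ p₂ s ξ) j := by
  rw [kirchhoffRoot, biquadraticRoot_apply]
  ring

theorem norm_div_mul_sqrt_div_le_abs_kirchhoffRoot_sub {M : ℝ}
    (hA : 0 < a₁ * (1 + s) + a₂ * (1 + s)) (hM : a₁ * (1 + s) + a₂ * (1 + s) ≤ M) (hd : 0 ≤ d)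
    (hD : d ≤ kirchhoffDiscr a₁ a₂ p₁ p₂ s ξ)
    (hAD : d ≤ (a₁ * (1 + s) + a₂ * (1 + s)) ^ 2 - kirchhoffDiscr a₁ a₂ p₁ p₂ s ξ)
    {j k : Fin 4} (hjk : j ≠ k) :
    ‖ξ‖ / √2 * √(d / M) ≤ |kirchhoffRoot a₁ a₂ p₁ p₂ s ξ j - kirchhoffRoot a₁ a₂ p₁ p₂ s ξ k| := by
  have gap := sqrt_div_le_abs_biquadraticRoot_sub hA hd hD hAD hjk
  rw [kirchhoffRoot_eq_mul_biquadraticRoot, kirchhoffRoot_eq_mul_biquadraticRoot, ← mul_sub,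
    abs_mul, abs_of_nonneg (by positivity : 0 ≤ ‖ξ‖ / √2)]
  gcongr
  exact (Real.sqrt_le_sqrt (by gcongr)).trans gap

end KirchhoffRoots

variable {E : Type*} [NormedAddCommGroup E] [NormedSpace ℝ E]

lemma inv_norm_smul_mem_unit_sphere {ξ : E} (hξ : ξ ≠ 0) :
    ‖ξ‖⁻¹ • ξ ∈ Metric.sphere (0 : E) 1 := by
  simpa using norm_smul_inv_norm (𝕜 := ℝ) hξ

section PosHomogeneous

/-- Positive homogeneity of degree `m` away from the origin, as for the symbol of a differential
operator of order `m`. The value at `0` is unconstrained. -/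
def PosHomogeneous (m : ℕ) (p : E → ℝ) : Prop :=
  ∀ ξ, ξ ≠ 0 → ∀ c : ℝ, 0 < c → p (c • ξ) = c ^ m * p ξ

lemma PosHomogeneous.mul {m k : ℕ} {p q : E → ℝ} (hp : PosHomogeneous m p)
    (hq : PosHomogeneous k q) : PosHomogeneous (m + k) (fun ξ ↦ p ξ * q ξ) := by
  intro ξ hξ c hc
  simp only [hp ξ hξ c hc, hq ξ hξ c hc]
  ring

lemma PosHomogeneous.mul_norm_rpow_neg {m : ℕ} {p : E → ℝ} (hp : PosHomogeneous m p) {ξ : E}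
    (hξ : ξ ≠ 0) : p ξ * ‖ξ‖ ^ (-m : ℝ) = p (‖ξ‖⁻¹ • ξ) := by
  rw [hp ξ hξ _ (inv_pos.2 (norm_pos_iff.2 hξ)), Real.rpow_neg (norm_nonneg ξ), Real.rpow_natCast,
    inv_pow, mul_comm]

end PosHomogeneous

section DiscriminantBounds

variable {a₁ a₂ s d : ℝ} {p₁ p₂ : E → ℝ} {ξ : E}

lemma kirchhoffDiscr_eq_of_posHomogeneous (h₁ : PosHomogeneous 2 p₁) (h₂ : PosHomogeneous 2 p₂)
    (hξ : ξ ≠ 0) : kirchhoffDiscr a₁ a₂ p₁ p₂ s ξ =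
      (a₁ - a₂) ^ 2 * (1 + s) ^ 2 + 4 * (p₁ (‖ξ‖⁻¹ • ξ) * p₂ (‖ξ‖⁻¹ • ξ)) := by
  have normalize : p₁ ξ * p₂ ξ * ‖ξ‖ ^ (-4 : ℝ) = p₁ (‖ξ‖⁻¹ • ξ) * p₂ (‖ξ‖⁻¹ • ξ) := by
    exact_mod_cast (h₁.mul h₂).mul_norm_rpow_neg hξ
  rw [kirchhoffDiscr, ← normalize]
  ring

lemma le_kirchhoffDiscr (h₁ : PosHomogeneous 2 p₁) (h₂ : PosHomogeneous 2 p₂)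
    (hd : ∀ ω ∈ Metric.sphere (0 : E) 1, d ≤ (a₁ - a₂) ^ 2 + 4 * p₁ ω * p₂ ω)
    (hs : 0 ≤ s) (hξ : ξ ≠ 0) : d ≤ kirchhoffDiscr a₁ a₂ p₁ p₂ s ξ := by
  have growth : (a₁ - a₂) ^ 2 ≤ (a₁ - a₂) ^ 2 * (1 + s) ^ 2 :=
    le_mul_of_one_le_right (sq_nonneg _) (one_le_pow₀ (by linarith))
  rw [kirchhoffDiscr_eq_of_posHomogeneous h₁ h₂ hξ]
  linarith [hd _ (inv_norm_smul_mem_unit_sphere hξ)]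

lemma four_mul_le_sq_sub_kirchhoffDiscr (ha : 0 ≤ a₁ * a₂)
    (h₁ : PosHomogeneous 2 p₁) (h₂ : PosHomogeneous 2 p₂)
    (hd : ∀ ω ∈ Metric.sphere (0 : E) 1, d ≤ a₁ * a₂ - p₁ ω * p₂ ω)
    (hs : 0 ≤ s) (hξ : ξ ≠ 0) :
    4 * d ≤ (a₁ * (1 + s) + a₂ * (1 + s)) ^ 2 - kirchhoffDiscr a₁ a₂ p₁ p₂ s ξ := by
  have growth : a₁ * a₂ ≤ a₁ * a₂ * (1 + s) ^ 2 :=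
    le_mul_of_one_le_right ha (one_le_pow₀ (by linarith))
  rw [kirchhoffDiscr_eq_of_posHomogeneous h₁ h₂ hξ]
  linarith [hd _ (inv_norm_smul_mem_unit_sphere hξ)]

end DiscriminantBounds

theorem coupled_kirchhoff_strict_hyperbolicity_general {T : Type*} {a₁ a₂ : ℝ}
    (ha₁ : 0 < a₁) (ha₂ : 0 < a₂) {P₁ P₂ : T → E → ℝ}
    (hhom₁ : ∀ t, PosHomogeneous 2 (P₁ t)) (hhom₂ : ∀ t, PosHomogeneous 2 (P₂ t))
    (hinf₁ : ∃ d > (0 : ℝ), ∀ t, ∀ ω ∈ Metric.sphere (0 : E) 1,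
      d ≤ (a₁ - a₂) ^ 2 + 4 * P₁ t ω * P₂ t ω)
    (hinf₂ : ∃ d > (0 : ℝ), ∀ t, ∀ ω ∈ Metric.sphere (0 : E) 1,
      d ≤ a₁ * a₂ - P₁ t ω * P₂ t ω) :
    (∀ s : ℝ, 0 ≤ s → ∀ t, ∀ ξ, ξ ≠ 0 →
      0 < kirchhoffDiscr a₁ a₂ (P₁ t) (P₂ t) s ξ ∧
      0 < a₁ * (1 + s) + a₂ * (1 + s) - √(kirchhoffDiscr a₁ a₂ (P₁ t) (P₂ t) s ξ)) ∧
    (∀ s : ℝ, 0 ≤ s → ∀ t, ∀ ξ, ξ ≠ 0 → ∀ j k, j ≠ k →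
      kirchhoffRoot a₁ a₂ (P₁ t) (P₂ t) s ξ j ≠ kirchhoffRoot a₁ a₂ (P₁ t) (P₂ t) s ξ k) ∧
    (∀ δ : ℝ, 0 < δ → ∃ d > (0 : ℝ), ∀ s ∈ Icc 0 δ, ∀ t, ∀ ω ∈ Metric.sphere (0 : E) 1,
      ∀ j k, j ≠ k →
        d ≤ |kirchhoffRoot a₁ a₂ (P₁ t) (P₂ t) s ω j -
          kirchhoffRoot a₁ a₂ (P₁ t) (P₂ t) s ω k|) := by
  obtain ⟨d₁, hd₁, hinf₁⟩ := hinf₁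
  obtain ⟨d₂, hd₂, hinf₂⟩ := hinf₂
  obtain ⟨d, hd, hdd₁, hdd₂⟩ : ∃ d > 0, d ≤ d₁ ∧ d ≤ 4 * d₂ :=
    ⟨min d₁ (4 * d₂), by positivity, min_le_left _ _, min_le_right _ _⟩
  have hA (s : ℝ) (hs : 0 ≤ s) : 0 < a₁ * (1 + s) + a₂ * (1 + s) := by positivity
  have hD (s : ℝ) (hs : 0 ≤ s) (t : T) (ξ : E) (hξ : ξ ≠ 0) :
      d ≤ kirchhoffDiscr a₁ a₂ (P₁ t) (P₂ t) s ξ :=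
    hdd₁.trans (le_kirchhoffDiscr (hhom₁ t) (hhom₂ t) (hinf₁ t) hs hξ)
  have hAD (s : ℝ) (hs : 0 ≤ s) (t : T) (ξ : E) (hξ : ξ ≠ 0) :
      d ≤ (a₁ * (1 + s) + a₂ * (1 + s)) ^ 2 - kirchhoffDiscr a₁ a₂ (P₁ t) (P₂ t) s ξ :=
    hdd₂.trans (four_mul_le_sq_sub_kirchhoffDiscr (by positivity) (hhom₁ t) (hhom₂ t)
      (hinf₂ t) hs hξ)
  refine ⟨fun s hs t ξ hξ ↦ ⟨hd.trans_le (hD s hs t ξ hξ), ?_⟩,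
    fun s hs t ξ hξ j k hjk ↦ ?_, fun δ hδ ↦ ?_⟩
  · exact sub_pos.2 ((Real.sqrt_lt' (hA s hs)).2 (sub_pos.1 (hd.trans_le (hAD s hs t ξ hξ))))
  · have hA := hA s hs
    have gap := norm_div_mul_sqrt_div_le_abs_kirchhoffRoot_sub hA le_rfl hd.le (hD s hs t ξ hξ)
      (hAD s hs t ξ hξ) hjk
    have gap_pos : 0 < ‖ξ‖ / √2 * √(d / (a₁ * (1 + s) + a₂ * (1 + s))) := by positivity
    exact sub_ne_zero.1 (abs_pos.1 (gap_pos.trans_le gap))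
  · refine ⟨1 / √2 * √(d / (a₁ * (1 + δ) + a₂ * (1 + δ))), by positivity,
      fun s ⟨hs, hsδ⟩ t ω hω j k hjk ↦ ?_⟩
    have hω₀ : ω ≠ 0 := ne_zero_of_mem_unit_sphere ⟨ω, hω⟩
    simpa only [mem_sphere_zero_iff_norm.1 hω] using
      norm_div_mul_sqrt_div_le_abs_kirchhoffRoot_sub (hA s hs) (by gcongr) hd.le (hD s hs t ω hω₀)
        (hAD s hs t ω hω₀) hjk

/-- uniform strict hyperbolicity of the `4×4` system obtained
from the coupled Kirchhoff equations of Example 2.2; `c_k² = a_k(1+s)` and the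
four characteristic roots `φ_j` are given by the explicit formula with all four
sign combinations. -/
theorem coupled_kirchhoff_strict_hyperbolicity
    (n : ℕ) (hn : 1 ≤ n) (a₁ a₂ : ℝ) (ha₁ : 0 < a₁) (ha₂ : 0 < a₂) (hne : a₁ ≠ a₂)
    (P₁ P₂ : ℝ → EuclideanSpace ℝ (Fin n) → ℝ)
    -- P₁, P₂ positively homogeneous of degree 2 in ξ
    (hhom₁ : ∀ t : ℝ, ∀ ξ : EuclideanSpace ℝ (Fin n), ξ ≠ 0 → ∀ c : ℝ, 0 < c →
      P₁ t (c • ξ) = c ^ 2 * P₁ t ξ)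
    (hhom₂ : ∀ t : ℝ, ∀ ξ : EuclideanSpace ℝ (Fin n), ξ ≠ 0 → ∀ c : ℝ, 0 < c →
      P₂ t (c • ξ) = c ^ 2 * P₂ t ξ)
    -- boundedness on the unit sphere
    (hbdd : ∃ C : ℝ, ∀ t : ℝ, ∀ ω ∈ Metric.sphere (0 : EuclideanSpace ℝ (Fin n)) 1,
      |P₁ t ω| ≤ C ∧ |P₂ t ω| ≤ C)
    -- inf_{t, |ξ|=1} {(a₁−a₂)² + 4P₁P₂} > 0
    (hinf₁ : ∃ d > (0:ℝ), ∀ t : ℝ,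
      ∀ ω ∈ Metric.sphere (0 : EuclideanSpace ℝ (Fin n)) 1,
        d ≤ (a₁ - a₂) ^ 2 + 4 * P₁ t ω * P₂ t ω)
    -- inf_{t, |ξ|=1} {a₁a₂ − P₁P₂} > 0
    (hinf₂ : ∃ d > (0:ℝ), ∀ t : ℝ,
      ∀ ω ∈ Metric.sphere (0 : EuclideanSpace ℝ (Fin n)) 1,
        d ≤ a₁ * a₂ - P₁ t ω * P₂ t ω)
    -- the four characteristic roots
    (φ : ℝ → ℝ → EuclideanSpace ℝ (Fin n) → Fin 4 → ℝ)
    (hφ : ∀ s t : ℝ, ∀ ξ : EuclideanSpace ℝ (Fin n), ∀ j : Fin 4,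
      φ s t ξ j = (![1, -1, 1, -1] j) * (‖ξ‖ / Real.sqrt 2) *
        Real.sqrt (a₁ * (1 + s) + a₂ * (1 + s) + (![1, 1, -1, -1] j) *
          Real.sqrt ((a₁ * (1 + s) - a₂ * (1 + s)) ^ 2 +
            4 * P₁ t ξ * P₂ t ξ * ‖ξ‖ ^ (-4 : ℝ)))) :
    -- the expressions under the square roots are positive
    (∀ s : ℝ, 0 ≤ s → ∀ t : ℝ, ∀ ξ : EuclideanSpace ℝ (Fin n), ξ ≠ 0 →
      0 < (a₁ * (1 + s) - a₂ * (1 + s)) ^ 2 +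
          4 * P₁ t ξ * P₂ t ξ * ‖ξ‖ ^ (-4 : ℝ) ∧
      0 < a₁ * (1 + s) + a₂ * (1 + s) -
          Real.sqrt ((a₁ * (1 + s) - a₂ * (1 + s)) ^ 2 +
            4 * P₁ t ξ * P₂ t ξ * ‖ξ‖ ^ (-4 : ℝ))) ∧
    -- the four roots are pairwise distinct
    (∀ s : ℝ, 0 ≤ s → ∀ t : ℝ, ∀ ξ : EuclideanSpace ℝ (Fin n), ξ ≠ 0 →
      ∀ j k : Fin 4, j ≠ k → φ s t ξ j ≠ φ s t ξ k) ∧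
    -- uniform gap on s ∈ [0,δ], t ∈ ℝ, |ξ| = 1
    (∀ δ : ℝ, 0 < δ → ∃ d > (0:ℝ), ∀ s ∈ Set.Icc 0 δ, ∀ t : ℝ,
      ∀ ω ∈ Metric.sphere (0 : EuclideanSpace ℝ (Fin n)) 1,
      ∀ j k : Fin 4, j ≠ k → d ≤ |φ s t ω j - φ s t ω k|) := by
  obtain rfl : φ = fun s t ↦ kirchhoffRoot a₁ a₂ (P₁ t) (P₂ t) s := by ext; apply hφ
  exact coupled_kirchhoff_strict_hyperbolicity_general ha₁ ha₂ hhom₁ hhom₂ hinf₁ hinf₂
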